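/- arXiv:2604.02063 — 4 statements merged into one kernel-verified Lean document; each statement's English description precedes it below -/
import Mathlib

section
/- Let R be a finite nontrivial commutative local principal ideal ring. Let F₀ and F₁ be affine permutations of R that do not commute. Then any two affine permutations G and G′ of R, each of which commutes with both F₀ and F₁, commute with each other. In other words, the common centralizer of F₀ and F₁ inside the group of affine permutations of R is abelian. -/
/-- Two self-maps of a type commute under composition. -/
def MapsCommute {α : Type*} (f g : α → α) : Prop :=
  f ∘ g = g ∘ f

/-- `f : R → R` is an affine permutation: `x ↦ a·x + b` with `a` a unit of `R`. -/
def IsAffinePerm {R : Type*} [CommRing R] (f : R → R) : Prop :=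
  ∃ a : Rˣ, ∃ b : R, ∀ x, f x = (a : R) * x + b

theorem dvd_total_aux {R : Type*} [CommRing R] [IsLocalRing R] [IsPrincipalIdealRing R]
    (a b : R) : a ∣ b ∨ b ∣ a := by
  obtain ⟨d, hd⟩ := (IsPrincipalIdealRing.principal (Ideal.span {a, b})).principal
  rw [Ideal.submodule_span_eq] at hd
  have ha : a ∈ Ideal.span {d} := hd ▸ Ideal.subset_span (by simp)
  have hb : b ∈ Ideal.span {d} := hd ▸ Ideal.subset_span (by simp)
  have hd' : d ∈ Ideal.span {a, b} := hd ▸ Ideal.subset_span (by simp)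
  obtain ⟨x, rfl⟩ := Ideal.mem_span_singleton.1 ha
  obtain ⟨y, rfl⟩ := Ideal.mem_span_singleton.1 hb
  obtain ⟨r, s, h⟩ := Ideal.mem_span_pair.1 hd'
  by_cases hx : IsUnit x
  · left
    exact mul_dvd_mul_left d hx.dvd |>.trans (dvd_refl _)
  by_cases hy : IsUnit y
  · right
    exact mul_dvd_mul_left d hy.dvd
  have hm : r * x + s * y ∈ IsLocalRing.maximalIdeal R :=
    Ideal.add_mem _ (Ideal.mul_mem_left _ _ hx) (Ideal.mul_mem_left _ _ hy)
  have hu : IsUnit (1 - (r * x + s * y)) := by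
    rcases IsLocalRing.isUnit_or_isUnit_one_sub_self (r * x + s * y) with h1 | h1
    · exact absurd h1 hm
    · exact h1
  have h0 : d * (1 - (r * x + s * y)) = 0 := by linear_combination -h
  have : d = 0 := (hu.mul_left_eq_zero).1 h0
  left
  simp [this]

theorem key_aux {R : Type*} [CommRing R] [IsLocalRing R] [IsPrincipalIdealRing R]
    (α β γ δ p q p' q' : R) (h1 : α ∣ β) (h2 : α ∣ γ)
    (hD : α * δ ≠ β * γ) (e1 : p * β = q * α) (e2 : p * δ = q * γ)
    (e3 : p' * β = q' * α) (e4 : p' * δ = q' * γ) : p * q' = q * p' := by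
  obtain ⟨s, rfl⟩ := h1
  obtain ⟨x, rfl⟩ := h2
  have aux : ∀ p q : R, p * (α * s) = q * α → p * δ = q * (α * x) → α ∣ p := by
    intro p q e1 e2
    rcases dvd_total_aux α p with h | ⟨c, hc⟩
    · exact h
    · exfalso
      apply hD
      have hw : p * (δ - s * (α * x)) = 0 := by linear_combination e2 - x * e1
      linear_combination (δ - s * (α * x)) * hc + c * hw
  obtain ⟨c, hc⟩ := aux p q e1 e2
  obtain ⟨c', hc'⟩ := aux p' q' e3 e4
  have t1 : α * (q - s * p) = 0 := by linear_combination -e1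
  have t2 : α * (q' - s * p') = 0 := by linear_combination -e3
  linear_combination (q' - s * p') * hc + c * t2 - (q - s * p) * hc' - c' * t1

theorem comm_iff_aux {R : Type*} [CommRing R] (f g : R → R) (a b c d : R)
    (hf : ∀ x, f x = a * x + b) (hg : ∀ x, g x = c * x + d) :
    MapsCommute f g ↔ (a - 1) * d = b * (c - 1) := by
  unfold MapsCommute
  constructor
  · intro h
    have := congrFun h 0
    simp only [Function.comp, hf, hg] at this
    linear_combination this
  · intro h
    funext x
    simp only [Function.comp, hf, hg]
    linear_combination h

/-- **Local obstruction.** Let `R` be a finite nontrivial commutative local principal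
ideal ring, and let `F₀`, `F₁` be noncommuting affine permutations of `R`. Then any two
affine permutations `G`, `G'` of `R`, each commuting with both `F₀` and `F₁`, commute
with each other: the common centralizer of `F₀` and `F₁` is abelian. -/
theorem common_centralizer_abelian {R : Type*} [CommRing R] [Finite R] [Nontrivial R]
    [IsLocalRing R] [IsPrincipalIdealRing R]
    (F₀ F₁ : R → R) (hF₀ : IsAffinePerm F₀) (hF₁ : IsAffinePerm F₁)
    (hnc : ¬ MapsCommute F₀ F₁)
    (G G' : R → R) (hG : IsAffinePerm G) (hG' : IsAffinePerm G')
    (hG0 : MapsCommute G F₀) (hG1 : MapsCommute G F₁)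
    (hG'0 : MapsCommute G' F₀) (hG'1 : MapsCommute G' F₁) :
    MapsCommute G G' := by
  obtain ⟨a, b, hF₀⟩ := hF₀
  obtain ⟨c, d, hF₁⟩ := hF₁
  obtain ⟨e, f, hG⟩ := hG
  obtain ⟨g, h, hG'⟩ := hG'
  rw [comm_iff_aux _ _ _ _ _ _ hF₀ hF₁] at hnc
  rw [comm_iff_aux _ _ _ _ _ _ hG hF₀] at hG0
  rw [comm_iff_aux _ _ _ _ _ _ hG hF₁] at hG1
  rw [comm_iff_aux _ _ _ _ _ _ hG' hF₀] at hG'0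
  rw [comm_iff_aux _ _ _ _ _ _ hG' hF₁] at hG'1
  rw [comm_iff_aux _ _ _ _ _ _ hG hG']
  generalize (a : R) - 1 = α at *
  generalize (c : R) - 1 = γ at *
  generalize (e : R) - 1 = p at *
  generalize (g : R) - 1 = p' at *
  have A : α ∣ b → α ∣ γ → p * h = f * p' := fun h1 h2 =>
    key_aux α b γ d p f p' h h1 h2 hnc hG0 hG1 hG'0 hG'1
  have B : b ∣ α → b ∣ d → p * h = f * p' := fun h1 h2 =>
    (key_aux b α d γ f p h p' h1 h2 (fun h => hnc h.symm) hG0.symm hG1.symm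
      hG'0.symm hG'1.symm).symm
  have C : γ ∣ d → γ ∣ α → p * h = f * p' := fun h1 h2 =>
    key_aux γ d α b p f p' h h1 h2 (fun h => hnc (by linear_combination -h)) hG1 hG0 hG'1 hG'0
  have D : d ∣ γ → d ∣ b → p * h = f * p' := fun h1 h2 =>
    (key_aux d γ b α f p h p' h1 h2 (fun h => hnc (by linear_combination h))
      hG1.symm hG0.symm hG'1.symm hG'0.symm).symm
  rcases dvd_total_aux α b with h1 | h1 <;> rcases dvd_total_aux γ d with h2 | h2
  · rcases dvd_total_aux α γ with h3 | h3
    exacts [A h1 h3, C h2 h3]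
  · rcases dvd_total_aux α d with h3 | h3
    exacts [A h1 (h3.trans h2), D h2 (h3.trans h1)]
  · rcases dvd_total_aux b γ with h3 | h3
    exacts [B h1 (h3.trans h2), C h2 (h3.trans h1)]
  · rcases dvd_total_aux b d with h3 | h3
    exacts [B h1 h3, D h2 h3]
end

section
/- Let R be a finite nontrivial commutative local principal ideal ring. Then there is no cross-commuting nonabelian square in the group of affine permutations of R: there do not exist affine permutations F₀, F₁, G₀, G₁ of R such that Fᵢ commutes with Gⱼ for all i, j ∈ {0,1} while F₀ does not commute with F₁ and G₀ does not commute with G₁. -/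
/-- A cross-commuting nonabelian square exists in the affine permutation group of `R`:
affine permutations `F₀, F₁, G₀, G₁` with all cross pairs `Fᵢ, Gⱼ` commuting while
`F₀, F₁` do not commute and `G₀, G₁` do not commute. -/
def HasCrossCommutingNonabelianSquare (R : Type*) [CommRing R] : Prop :=
  ∃ F₀ F₁ G₀ G₁ : R → R,
    IsAffinePerm F₀ ∧ IsAffinePerm F₁ ∧ IsAffinePerm G₀ ∧ IsAffinePerm G₁ ∧
    MapsCommute F₀ G₀ ∧ MapsCommute F₀ G₁ ∧ MapsCommute F₁ G₀ ∧ MapsCommute F₁ G₁ ∧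
    ¬ MapsCommute F₀ F₁ ∧ ¬ MapsCommute G₀ G₁

theorem exists_min_dvd_aux {R : Type*} [CommRing R] [IsLocalRing R] [IsPrincipalIdealRing R]
    (a : R) (l : List R) : ∃ m ∈ a :: l, ∀ x ∈ a :: l, m ∣ x := by
  induction l generalizing a with
  | nil => exact ⟨a, by simp⟩
  | cons b l ih =>
    obtain ⟨m, hm, h⟩ := ih b
    rcases dvd_total_aux a m with k | k
    · refine ⟨a, by simp, fun x hx => ?_⟩
      rcases List.mem_cons.1 hx with rfl | hx
      · exact dvd_refl _
      · exact k.trans (h x hx)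
    · refine ⟨m, List.mem_cons_of_mem _ hm, fun x hx => ?_⟩
      rcases List.mem_cons.1 hx with rfl | hx
      · exact k
      · exact h x hx

theorem pairing_aux {R : Type*} [CommRing R] {α β c₀ d₀ c₁ d₁ : R}
    (hβ : α ∣ β) (h₀ : α ∣ c₀) (h₁ : α ∣ c₁)
    (e₀ : α * d₀ = c₀ * β) (e₁ : α * d₁ = c₁ * β) : c₀ * d₁ = c₁ * d₀ := by
  obtain ⟨s, rfl⟩ := hβ
  obtain ⟨k, rfl⟩ := h₀
  obtain ⟨l, rfl⟩ := h₁
  linear_combination k * e₁ - l * e₀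

theorem pairing_aux' {R : Type*} [CommRing R] {α β c₀ d₀ c₁ d₁ : R}
    (hβ : β ∣ α) (h₀ : β ∣ d₀) (h₁ : β ∣ d₁)
    (e₀ : α * d₀ = c₀ * β) (e₁ : α * d₁ = c₁ * β) : c₀ * d₁ = c₁ * d₀ := by
  obtain ⟨s, rfl⟩ := hβ
  obtain ⟨k, rfl⟩ := h₀
  obtain ⟨l, rfl⟩ := h₁
  linear_combination k * e₁ - l * e₀

theorem mapsCommute_iff_aux {R : Type*} [CommRing R] {f g : R → R} {a b c d : R}
    (hf : ∀ x, f x = a * x + b) (hg : ∀ x, g x = c * x + d) :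
    MapsCommute f g ↔ (a - 1) * d = (c - 1) * b := by
  unfold MapsCommute
  constructor
  · intro h
    have := congrFun h 0
    simp only [Function.comp, hf, hg] at this
    linear_combination this
  · intro h
    funext x
    simp only [Function.comp, hf, hg]
    linear_combination h

/-- **No cross-commuting nonabelian square over a finite commutative local principal
ideal ring.** -/
theorem no_cross_commuting_nonabelian_square_local {R : Type*} [CommRing R] [Finite R]
    [Nontrivial R] [IsLocalRing R] [IsPrincipalIdealRing R] :
    ¬ HasCrossCommutingNonabelianSquare R := by
  rintro ⟨F₀, F₁, G₀, G₁, ⟨a₀, b₀, hF₀⟩, ⟨a₁, b₁, hF₁⟩, ⟨c₀, d₀, hG₀⟩, ⟨c₁, d₁, hG₁⟩,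
    h00, h01, h10, h11, hF, hG⟩
  rw [mapsCommute_iff_aux hF₀ hG₀] at h00
  rw [mapsCommute_iff_aux hF₀ hG₁] at h01
  rw [mapsCommute_iff_aux hF₁ hG₀] at h10
  rw [mapsCommute_iff_aux hF₁ hG₁] at h11
  rw [mapsCommute_iff_aux hF₀ hF₁] at hF
  rw [mapsCommute_iff_aux hG₀ hG₁] at hG
  generalize (a₀ : R) - 1 = p₀ at *
  generalize (a₁ : R) - 1 = p₁ at *
  generalize (c₀ : R) - 1 = q₀ at *
  generalize (c₁ : R) - 1 = q₁ at *
  obtain ⟨m, hm, h⟩ := exists_min_dvd_aux p₀ [b₀, p₁, b₁, q₀, d₀, q₁, d₁]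
  simp only [List.mem_cons, List.not_mem_nil, or_false, forall_eq_or_imp, forall_eq] at hm h
  obtain ⟨k1, k2, k3, k4, k5, k6, k7, k8⟩ := h
  rcases hm with rfl | rfl | rfl | rfl | rfl | rfl | rfl | rfl
  · exact hG (pairing_aux k2 k5 k7 h00 h01)
  · exact hG (pairing_aux' k1 k6 k8 h00 h01)
  · exact hG (pairing_aux k4 k5 k7 h10 h11)
  · exact hG (pairing_aux' k3 k6 k8 h10 h11)
  · exact hF (pairing_aux k6 k1 k3 h00.symm h10.symm)
  · exact hF (pairing_aux' k5 k2 k4 h00.symm h10.symm)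
  · exact hF (pairing_aux k8 k1 k3 h01.symm h11.symm)
  · exact hF (pairing_aux' k7 k2 k4 h01.symm h11.symm)
end

section
/- Let ι be a finite nonempty index set and for each k ∈ ι let R_k be a finite nontrivial commutative local principal ideal ring, and let R = ∏_{k ∈ ι} R_k be the product ring. Then the group of affine permutations of R contains a cross-commuting nonabelian square if and only if there exist distinct indices i ≠ j in ι such that the affine permutation group of R_i contains a noncommuting pair and the affine permutation group of R_j contains a noncommuting pair. -/
/-- The affine permutation group of `S` contains a noncommuting pair. -/
def HasNoncommutingAffinePair (S : Type*) [CommRing S] : Prop :=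
  ∃ f g : S → S, IsAffinePerm f ∧ IsAffinePerm g ∧ ¬ MapsCommute f g

/-- Commutation criterion for affine maps. -/
lemma mapsCommute_iff {S : Type*} [CommRing S] {f g : S → S} {a c b d : S}
    (hf : ∀ x, f x = a * x + b) (hg : ∀ x, g x = c * x + d) :
    MapsCommute f g ↔ (a - 1) * d = (c - 1) * b := by
  unfold MapsCommute
  constructor
  · intro h
    have h0 := congrFun h 0
    simp only [Function.comp, hf, hg] at h0
    linear_combination h0
  · intro h
    funext x
    simp only [Function.comp, hf, hg]
    linear_combination h

/-- Divisibility is total in a local principal ideal ring. -/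
lemma dvd_total_of_local {S : Type*} [CommRing S] [IsLocalRing S] [IsPrincipalIdealRing S]
    (a b : S) : a ∣ b ∨ b ∣ a := by
  obtain ⟨g, hg⟩ := (IsPrincipalIdealRing.principal (Ideal.span {a, b})).principal
  have ha : a ∈ Ideal.span {g} := by
    have : a ∈ Ideal.span {a, b} := Ideal.subset_span (by simp)
    rw [hg] at this; exact this
  have hb : b ∈ Ideal.span {g} := by
    have : b ∈ Ideal.span {a, b} := Ideal.subset_span (by simp)
    rw [hg] at this; exact this
  have hgm : g ∈ Ideal.span {a, b} := by
    rw [hg]; exact Submodule.mem_span_singleton_self g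
  obtain ⟨a', ha'⟩ := Ideal.mem_span_singleton.1 ha
  obtain ⟨b', hb'⟩ := Ideal.mem_span_singleton.1 hb
  obtain ⟨x, y, hxy⟩ := Ideal.mem_span_pair.1 hgm
  rcases IsLocalRing.isUnit_or_isUnit_one_sub_self (x * a' + y * b') with h | h
  · rcases IsLocalRing.isUnit_or_isUnit_of_isUnit_add h with h | h
    · left
      obtain ⟨u, hu⟩ := isUnit_of_mul_isUnit_right h
      rw [ha', hb', ← hu]
      exact (Units.mul_right_dvd.2 dvd_rfl).trans (dvd_mul_right g b')
    · right
      obtain ⟨u, hu⟩ := isUnit_of_mul_isUnit_right h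
      rw [ha', hb', ← hu]
      exact (Units.mul_right_dvd.2 dvd_rfl).trans (dvd_mul_right g a')
  · have h0 : g * (1 - (x * a' + y * b')) = 0 := by
      rw [ha', hb'] at hxy
      linear_combination -hxy
    have hg0 : g = 0 := (h.mul_left_eq_zero).1 h0
    left
    rw [hb', hg0]; simp

lemma exists_min_dvd {S : Type*} [CommRing S] [IsLocalRing S] [IsPrincipalIdealRing S]
    (a : S) (l : List S) : ∃ t ∈ a :: l, ∀ x ∈ a :: l, t ∣ x := by
  induction l generalizing a with
  | nil => exact ⟨a, by simp, by simp⟩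
  | cons b l ih =>
    obtain ⟨t, ht, h⟩ := ih b
    rcases dvd_total_of_local a t with h1 | h1
    · refine ⟨a, by simp, fun x hx => ?_⟩
      rcases List.mem_cons.1 hx with rfl | hx
      · exact dvd_rfl
      · exact h1.trans (h x hx)
    · refine ⟨t, List.mem_cons_of_mem _ ht, fun x hx => ?_⟩
      rcases List.mem_cons.1 hx with rfl | hx
      · exact h1
      · exact h x hx

lemma core {S : Type*} [CommRing S] {t b v0 v1 d0 d1 : S} (h0 : t ∣ v0) (h1 : t ∣ v1)
    (e0 : t * d0 = v0 * b) (e1 : t * d1 = v1 * b) : v0 * d1 = v1 * d0 := by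
  obtain ⟨x, rfl⟩ := h0
  obtain ⟨y, rfl⟩ := h1
  linear_combination x * e1 - y * e0

/-- No cross-commuting square over a local principal ideal ring. -/
lemma no_square {S : Type*} [CommRing S] [IsLocalRing S] [IsPrincipalIdealRing S]
    {u0 u1 b0 b1 v0 v1 d0 d1 : S}
    (h00 : u0 * d0 = v0 * b0) (h01 : u0 * d1 = v1 * b0)
    (h10 : u1 * d0 = v0 * b1) (h11 : u1 * d1 = v1 * b1) :
    u0 * b1 = u1 * b0 ∨ v0 * d1 = v1 * d0 := by
  obtain ⟨t, ht, h⟩ := exists_min_dvd u0 [u1, b0, b1, v0, v1, d0, d1]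
  simp only [List.mem_cons, List.not_mem_nil, or_false, forall_eq_or_imp, forall_eq] at ht h
  obtain ⟨a1, a2, a3, a4, a5, a6, a7, a8⟩ := h
  rcases ht with rfl | rfl | rfl | rfl | rfl | rfl | rfl | rfl
  · exact Or.inr (core a5 a6 h00 h01)
  · exact Or.inr (core a5 a6 h10 h11)
  · right
    have := core (t := t) (b := u0) (d0 := v0) (d1 := v1) a7 a8
      (by linear_combination -h00) (by linear_combination -h01)
    linear_combination -this
  · right
    have := core (t := t) (b := u1) (d0 := v0) (d1 := v1) a7 a8
      (by linear_combination -h10) (by linear_combination -h11)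
    linear_combination -this
  · exact Or.inl (core (t := t) (b := d0) a1 a2
      (by linear_combination -h00) (by linear_combination -h10))
  · exact Or.inl (core (t := t) (b := d1) a1 a2
      (by linear_combination -h01) (by linear_combination -h11))
  · left
    have := core (t := t) (b := v0) (d0 := u0) (d1 := u1) a3 a4
      (by linear_combination h00) (by linear_combination h10)
    linear_combination -this
  · left
    have := core (t := t) (b := v1) (d0 := u0) (d1 := u1) a3 a4
      (by linear_combination h01) (by linear_combination h11)
    linear_combination -this

lemma noncomm_of {S : Type*} [CommRing S] (a c : Sˣ) (b d : S)
    (h : ¬ ((a : S) - 1) * d = ((c : S) - 1) * b) : HasNoncommutingAffinePair S :=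
  ⟨fun x => a * x + b, fun x => c * x + d, ⟨a, b, fun _ => rfl⟩, ⟨c, d, fun _ => rfl⟩,
    fun hc => h ((mapsCommute_iff (fun _ => rfl) (fun _ => rfl)).1 hc)⟩

open Classical in
/-- A unit of the product that is trivial off coordinate `i`. -/
noncomputable def liftUnit {ι : Type*} (R : ι → Type*) [∀ k, CommRing (R k)] (i : ι)
    (a : (R i)ˣ) : (∀ k, R k)ˣ :=
  MulEquiv.piUnits.symm (Function.update 1 i a)

lemma liftUnit_same {ι : Type*} (R : ι → Type*) [∀ k, CommRing (R k)] (i : ι)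
    (a : (R i)ˣ) : (liftUnit R i a : ∀ k, R k) i = a := by
  simp [liftUnit, MulEquiv.piUnits]

lemma liftUnit_ne {ι : Type*} (R : ι → Type*) [∀ k, CommRing (R k)] {i k : ι} (h : k ≠ i)
    (a : (R i)ˣ) : (liftUnit R i a : ∀ k, R k) k = 1 := by
  simp [liftUnit, MulEquiv.piUnits, h]

/-- **Classification over finite commutative principal ideal rings (local factors
version).** Let `R = ∏ k, R k` be a finite product of finite nontrivial commutative
local principal ideal rings. The affine group of `R` contains a cross-commuting
nonabelian square if and only if there are two distinct indices `i ≠ j` whose affine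
groups each contain a noncommuting pair. -/
theorem pir_classification {ι : Type*} [Fintype ι] [Nonempty ι] (R : ι → Type*)
    [∀ k, CommRing (R k)] [∀ k, Finite (R k)] [∀ k, Nontrivial (R k)]
    [∀ k, IsLocalRing (R k)] [∀ k, IsPrincipalIdealRing (R k)] :
    HasCrossCommutingNonabelianSquare (∀ k, R k) ↔
      ∃ i j : ι, i ≠ j ∧ HasNoncommutingAffinePair (R i) ∧ HasNoncommutingAffinePair (R j) := by
  classical
  constructor
  · rintro ⟨F₀, F₁, G₀, G₁, ⟨a0, b0, hF0⟩, ⟨a1, b1, hF1⟩, ⟨c0, d0, hG0⟩, ⟨c1, d1, hG1⟩,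
      h00, h01, h10, h11, hF, hG⟩
    rw [mapsCommute_iff hF0 hG0] at h00
    rw [mapsCommute_iff hF0 hG1] at h01
    rw [mapsCommute_iff hF1 hG0] at h10
    rw [mapsCommute_iff hF1 hG1] at h11
    rw [mapsCommute_iff hF0 hF1] at hF
    rw [mapsCommute_iff hG0 hG1] at hG
    obtain ⟨i, hi⟩ := Function.ne_iff.1 hF
    obtain ⟨j, hj⟩ := Function.ne_iff.1 hG
    refine ⟨i, j, ?_,
      noncomm_of (MulEquiv.piUnits a0 i) (MulEquiv.piUnits a1 i) (b0 i) (b1 i) hi,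
      noncomm_of (MulEquiv.piUnits c0 j) (MulEquiv.piUnits c1 j) (d0 j) (d1 j) hj⟩
    rintro rfl
    rcases no_square (congrFun h00 i) (congrFun h01 i) (congrFun h10 i) (congrFun h11 i)
      with h | h
    · exact hi h
    · exact hj h
  · rintro ⟨i, j, hij, ⟨f0, f1, ⟨a0, b0, hf0⟩, ⟨a1, b1, hf1⟩, hf⟩,
      ⟨g0, g1, ⟨c0, d0, hg0⟩, ⟨c1, d1, hg1⟩, hg⟩⟩
    rw [mapsCommute_iff hf0 hf1] at hf
    rw [mapsCommute_iff hg0 hg1] at hg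
    have cross : ∀ (a : (R i)ˣ) (b : R i) (c : (R j)ˣ) (d : R j),
        MapsCommute (fun x : ∀ k, R k => (liftUnit R i a : ∀ k, R k) * x + Pi.single i b)
          (fun x : ∀ k, R k => (liftUnit R j c : ∀ k, R k) * x + Pi.single j d) := by
      intro a b c d
      rw [mapsCommute_iff (fun _ => rfl) (fun _ => rfl)]
      funext k
      by_cases hi : k = i
      · subst hi
        simp [liftUnit_ne R hij, hij]
      · by_cases hj : k = j
        · subst hj
          simp [liftUnit_ne R hi, hi]
        · simp [hi, hj]
    have non : ∀ (l : ι) (a c : (R l)ˣ) (b d : R l),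
        ¬ ((a : R l) - 1) * d = ((c : R l) - 1) * b →
        ¬ MapsCommute (fun x : ∀ k, R k => (liftUnit R l a : ∀ k, R k) * x + Pi.single l b)
          (fun x : ∀ k, R k => (liftUnit R l c : ∀ k, R k) * x + Pi.single l d) := by
      intro l a c b d h hc
      rw [mapsCommute_iff (fun _ => rfl) (fun _ => rfl)] at hc
      apply h
      simpa [liftUnit_same] using congrFun hc l
    exact ⟨_, _, _, _, ⟨_, _, fun _ => rfl⟩, ⟨_, _, fun _ => rfl⟩, ⟨_, _, fun _ => rfl⟩,
      ⟨_, _, fun _ => rfl⟩, cross a0 b0 c0 d0, cross a0 b0 c1 d1, cross a1 b1 c0 d0,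
      cross a1 b1 c1 d1, non i a0 a1 b0 b1 hf, non j c0 c1 d0 d1 hg⟩
end

section
/- Let m ≥ 1 and let V be a finite type. Let F, G : ℤ/mℤ → Matrix V V 𝔽₂ be families of matrices over the field with two elements such that F(i) · G(j) = G(j) · F(i) for all i, j ∈ ℤ/mℤ. Then for all j, k ∈ {0, 1}, the block-product sum ∑_{ℓ ∈ ℤ/mℤ} ( F(ℓ − j) · G(k − ℓ) + G(k − ℓ) · F(ℓ − j) ) equals the zero matrix; consequently, the two-row block matrix Ĥ_X whose (j, ℓ) block is F(ℓ − j) for ℓ in the first m block-columns and G(ℓ − j) (with appropriate index shift) in the last m block-columns, and the block matrix Ĥ_Z whose transpose pairs the G-blocks against the F-blocks as in the Hagiwara–Imai construction, satisfy Ĥ_X · Ĥ_Zᵀ = 0 over 𝔽₂. -/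
open Matrix

/-- **Hagiwara–Imai orthogonality.** Let `F, G : ℤ/mℤ → Matrix V V 𝔽₂` be families of
matrices over `𝔽₂ = ℤ/2ℤ` such that `F i` commutes with `G j` for all `i, j`. Then for
all `j, k ∈ {0,1}` the block-product sum
`∑ ℓ, (F (ℓ - j) * G (k - ℓ) + G (k - ℓ) * F (ℓ - j))` vanishes; consequently the
two-row Hagiwara–Imai block arrays `Ĥ_X` and `Ĥ_Z` (with rows indexed by `Fin 2 × V`,
block columns indexed by `(ℤ/mℤ ⊕ ℤ/mℤ) × V`, the `(j, ℓ)` block of `Ĥ_X` being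
`F (ℓ - j)` on the left half and `G (ℓ - j)` on the right half, and the `(k, ℓ)` block
of `Ĥ_Z` being `(G (k - ℓ))ᵀ` on the left half and `(F (k - ℓ))ᵀ` on the right half, so
that the `(j, k)` block of `Ĥ_X * Ĥ_Zᵀ` is exactly the sum above) satisfy
`Ĥ_X * Ĥ_Zᵀ = 0` over `𝔽₂`. -/
theorem hagiwara_imai_orthogonality (m : ℕ) [NeZero m] (hm : 1 ≤ m)
    (V : Type*) [Fintype V]
    (F G : ZMod m → Matrix V V (ZMod 2))
    (hcomm : ∀ i j : ZMod m, F i * G j = G j * F i)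
    (HX HZ : Matrix (Fin 2 × V) ((ZMod m ⊕ ZMod m) × V) (ZMod 2))
    (hHXF : ∀ (j : Fin 2) (v : V) (ℓ : ZMod m) (w : V),
      HX (j, v) (Sum.inl ℓ, w) = F (ℓ - ((j : ℕ) : ZMod m)) v w)
    (hHXG : ∀ (j : Fin 2) (v : V) (ℓ : ZMod m) (w : V),
      HX (j, v) (Sum.inr ℓ, w) = G (ℓ - ((j : ℕ) : ZMod m)) v w)
    (hHZG : ∀ (k : Fin 2) (v : V) (ℓ : ZMod m) (w : V),
      HZ (k, v) (Sum.inl ℓ, w) = (G (((k : ℕ) : ZMod m) - ℓ))ᵀ v w)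
    (hHZF : ∀ (k : Fin 2) (v : V) (ℓ : ZMod m) (w : V),
      HZ (k, v) (Sum.inr ℓ, w) = (F (((k : ℕ) : ZMod m) - ℓ))ᵀ v w) :
    (∀ j k : Fin 2,
      ∑ ℓ : ZMod m,
        (F (ℓ - ((j : ℕ) : ZMod m)) * G (((k : ℕ) : ZMod m) - ℓ) +
          G (((k : ℕ) : ZMod m) - ℓ) * F (ℓ - ((j : ℕ) : ZMod m))) = 0) ∧
    HX * HZᵀ = 0 := by
  have h1 : ∀ j k : Fin 2,
      ∑ ℓ : ZMod m,
        (F (ℓ - ((j : ℕ) : ZMod m)) * G (((k : ℕ) : ZMod m) - ℓ) +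
          G (((k : ℕ) : ZMod m) - ℓ) * F (ℓ - ((j : ℕ) : ZMod m))) = 0 := by
    intro j k
    refine Finset.sum_eq_zero fun ℓ _ => ?_
    rw [hcomm]
    ext v w
    exact CharTwo.add_self_eq_zero _
  refine ⟨h1, ?_⟩
  ext ⟨j, v⟩ ⟨k, w⟩
  have key : (HX * HZᵀ) (j, v) (k, w) =
      (∑ ℓ : ZMod m, F (ℓ - ((j : ℕ) : ZMod m)) * G (((k : ℕ) : ZMod m) - ℓ) +
        ∑ ℓ : ZMod m, G (ℓ - ((j : ℕ) : ZMod m)) * F (((k : ℕ) : ZMod m) - ℓ)) v w := by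
    simp only [Matrix.mul_apply, Matrix.transpose_apply, Matrix.add_apply, Matrix.sum_apply,
      Fintype.sum_prod_type, Fintype.sum_sum_type, hHXF, hHXG, hHZG, hHZF]
  have re : ∑ ℓ : ZMod m, G (ℓ - ((j : ℕ) : ZMod m)) * F (((k : ℕ) : ZMod m) - ℓ) =
      ∑ ℓ : ZMod m, G (((k : ℕ) : ZMod m) - ℓ) * F (ℓ - ((j : ℕ) : ZMod m)) := by
    refine Fintype.sum_equiv
      (Equiv.subLeft (((j : ℕ) : ZMod m) + ((k : ℕ) : ZMod m))) _ _ fun ℓ => ?_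
    simp only [Equiv.subLeft_apply]
    congr 2 <;> ring
  rw [key, re, ← Finset.sum_add_distrib, h1]
  rfl
end
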